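/- Let f(v₁,v₂) = e^{a v₁ + b v₂}/((1-e^{-v₁})³(1-e^{-v₂})³(1-e^{-(v₁+v₂)})³) as a meromorphic function of (v₁,v₂) ∈ ℂ². For nonnegative integers a ≥ b, the iterated residue res_{v₂=0} res_{v₁=0} f (where the inner residue in v₁ is taken with v₂ a fixed nonzero parameter) equals the number of 9-tuples of nonnegative integers (i₁,i₂,i₃,j₁,j₂,j₃,k₁,k₂,k₃) with ∑ i + ∑ k = a, ∑ j + ∑ k = b. -/

import Mathlib

open Complex

/-- The meromorphic function `f(v₁,v₂) = e^{a v₁ + b v₂} /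
((1-e^{-v₁})³ (1-e^{-v₂})³ (1-e^{-(v₁+v₂)})³)`. -/
noncomputable def f (a b : ℕ) (v₁ v₂ : ℂ) : ℂ :=
  Complex.exp (a * v₁ + b * v₂) /
    ((1 - Complex.exp (-v₁)) ^ 3 * (1 - Complex.exp (-v₂)) ^ 3 *
      (1 - Complex.exp (-(v₁ + v₂))) ^ 3)

/-!
Write `x = e^{-v₁}` and `y = e^{-v₂}`. The partial fraction identity
`(1 - y) / ((1 - x) (1 - x y)) = 1 / (1 - x) - y / (1 - x y)` yields the same recurrence in the
exponents `(p, q, r)` for the iterated residue of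
`x^{-a} y^{-b} / ((1 - x)^p (1 - y)^q (1 - x y)^r)` and for the coefficient of `x^a y^b` in the
power series `1 / ((1 - x)^p (1 - y)^q (1 - x y)^r)`. It lowers `p + r`, so it suffices to treat
`r = 0`, where both sides split into a product of one-variable analogues, and `p = 0`, where both
vanish as soon as `b < a`: the coefficient because every power of `x` comes with the same power of
`y`, the residue because the integrand has no pole at `v₁ = 0`. Whenever the recurrence lowers `p`,
it raises `q` and multiplies by `y`, that is, it lowers `b`; so it preserves the conditions
`b < a + p` and `0 < b + q`. Since `b` may become negative, the factor `y^s` is carried along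
explicitly and `b` is kept fixed.
-/

open Metric Function
open scoped Real

section Residues

open Set

/-- The residue at `0` of a function that is holomorphic on the punctured closed disc of radius `r`,
encoded as its normalised integral over the circle of radius `r`. -/
noncomputable def circleResidue (r : ℝ) (g : ℂ → ℂ) : ℂ :=
  (1 / (2 * π * I)) * ∮ v in C(0, r), g v

/-- The iterated residue `res_{v₂=0} res_{v₁=0} F`, taken over circles of radii `ε₁` (for the inner
variable `v₁`) and `ε₂` (for the outer variable `v₂`). -/
noncomputable def iteratedResidue (ε₁ ε₂ : ℝ) (F : ℂ → ℂ → ℂ) : ℂ :=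
  circleResidue ε₂ fun v₂ => circleResidue ε₁ fun v₁ => F v₁ v₂

variable {r ε₁ ε₂ : ℝ} {g k : ℂ → ℂ} {F G : ℂ → ℂ → ℂ}

lemma circleResidue_congr (hr : 0 ≤ r) (h : EqOn g k (sphere 0 r)) :
    circleResidue r g = circleResidue r k := by
  rw [circleResidue, circleIntegral.integral_congr hr h, circleResidue]

lemma circleResidue_sub (hg : CircleIntegrable g 0 r) (hk : CircleIntegrable k 0 r) :
    circleResidue r (fun v => g v - k v) = circleResidue r g - circleResidue r k := by
  rw [circleResidue, circleIntegral.integral_sub hg hk, mul_sub, circleResidue, circleResidue]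

lemma circleResidue_const_mul (c : ℂ) :
    circleResidue r (fun v => c * g v) = c * circleResidue r g := by
  rw [circleResidue, circleIntegral.integral_const_mul, mul_left_comm, circleResidue]

lemma circleResidue_eq_zero_of_differentiableOn (hr : 0 ≤ r)
    (hg : DifferentiableOn ℂ g (closedBall 0 r)) : circleResidue r g = 0 := by
  rw [circleResidue, (hg.diffContOnCl_ball Subset.rfl).circleIntegral_eq_zero hr, mul_zero]

lemma circleResidue_eq_zero_of_hasDerivAt (hr : 0 ≤ r)
    (hg : ∀ v ∈ sphere 0 r, HasDerivAt k (g v) v) : circleResidue r g = 0 := by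
  rw [circleResidue, circleIntegral.integral_eq_zero_of_hasDerivWithinAt hr
    fun v hv => (hg v hv).hasDerivWithinAt, mul_zero]

lemma circleResidue_inv_of_simple_zero (hr : 0 < r) (hg : DifferentiableOn ℂ g (closedBall 0 r))
    (hg_zero : g 0 = 0) (hg_deriv : deriv g 0 ≠ 0)
    (hg_ne : ∀ v ∈ closedBall 0 r, v ≠ 0 → g v ≠ 0) :
    circleResidue r (fun v => (g v)⁻¹) = (deriv g 0)⁻¹ := by
  have h_slope : ∀ v ≠ 0, dslope g 0 v = g v / v := fun v hv => by
    rw [dslope_of_ne _ hv, slope_def_field, hg_zero, sub_zero, sub_zero]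
  have h_slope_ne : ∀ v ∈ closedBall 0 r, dslope g 0 v ≠ 0 := fun v hv => by
    rcases eq_or_ne v 0 with rfl | hv0
    · rwa [dslope_same]
    · rw [h_slope v hv0]
      exact div_ne_zero (hg_ne v hv hv0) hv0
  have h_diff : DifferentiableOn ℂ (fun v => (dslope g 0 v)⁻¹) (closedBall 0 r) :=
    ((Complex.differentiableOn_dslope (closedBall_mem_nhds 0 hr)).2 hg).fun_inv h_slope_ne
  have h_cauchy := (h_diff.diffContOnCl_ball Subset.rfl).circleIntegral_sub_inv_smul
    (mem_ball_self hr)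
  have h_integrand : EqOn (fun v => (g v)⁻¹) (fun v => (v - 0)⁻¹ • (dslope g 0 v)⁻¹)
      (sphere 0 r) := fun v hv => by
    have hv0 : v ≠ 0 := ne_zero_of_mem_sphere hr.ne' ⟨v, hv⟩
    simp only [h_slope v hv0, sub_zero, smul_eq_mul, inv_div]
    field_simp
  rw [circleResidue, circleIntegral.integral_congr hr.le h_integrand, h_cauchy, dslope_same,
    smul_eq_mul, ← mul_assoc, one_div_mul_cancel two_pi_I_ne_zero, one_mul]

lemma circleIntegrable_circleResidue (hε₁ : 0 ≤ ε₁) (hε₂ : 0 ≤ ε₂)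
    (hF : ContinuousOn (uncurry F) (sphere 0 ε₁ ×ˢ sphere 0 ε₂)) :
    CircleIntegrable (fun v₂ => circleResidue ε₁ fun v₁ => F v₁ v₂) 0 ε₂ := by
  have h_param : Continuous fun θ : ℝ × ℝ => F (circleMap 0 ε₁ θ.2) (circleMap 0 ε₂ θ.1) :=
    hF.comp_continuous (f := fun θ : ℝ × ℝ => (circleMap 0 ε₁ θ.2, circleMap 0 ε₂ θ.1))
      (by fun_prop) fun θ => ⟨circleMap_mem_sphere _ hε₁ _, circleMap_mem_sphere _ hε₂ _⟩
  refine (Continuous.const_mul ?_ _).intervalIntegrable _ _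
  refine intervalIntegral.continuous_parametric_intervalIntegral_of_continuous' ?_ _ _
  simp only [deriv_circleMap, smul_eq_mul, uncurry_def]
  exact (((continuous_circleMap 0 ε₁).comp continuous_snd).mul_const I).mul h_param

lemma iteratedResidue_congr (hε₁ : 0 ≤ ε₁) (hε₂ : 0 ≤ ε₂)
    (h : ∀ v₁ ∈ sphere 0 ε₁, ∀ v₂ ∈ sphere 0 ε₂, F v₁ v₂ = G v₁ v₂) :
    iteratedResidue ε₁ ε₂ F = iteratedResidue ε₁ ε₂ G :=
  circleResidue_congr hε₂ fun v₂ hv₂ => circleResidue_congr hε₁ fun v₁ hv₁ => h v₁ hv₁ v₂ hv₂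

lemma iteratedResidue_sub (hε₁ : 0 ≤ ε₁) (hε₂ : 0 ≤ ε₂)
    (hF : ContinuousOn (uncurry F) (sphere 0 ε₁ ×ˢ sphere 0 ε₂))
    (hG : ContinuousOn (uncurry G) (sphere 0 ε₁ ×ˢ sphere 0 ε₂)) :
    iteratedResidue ε₁ ε₂ (fun v₁ v₂ => F v₁ v₂ - G v₁ v₂) =
      iteratedResidue ε₁ ε₂ F - iteratedResidue ε₁ ε₂ G := by
  have h_inner : EqOn (fun v₂ => circleResidue ε₁ fun v₁ => F v₁ v₂ - G v₁ v₂)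
      (fun v₂ => (circleResidue ε₁ fun v₁ => F v₁ v₂) - circleResidue ε₁ fun v₁ => G v₁ v₂)
      (sphere 0 ε₂) := fun v₂ hv₂ => by
    exact circleResidue_sub
      ((hF.uncurry_right v₂ hv₂).circleIntegrable hε₁)
      ((hG.uncurry_right v₂ hv₂).circleIntegrable hε₁)
  rw [iteratedResidue, circleResidue_congr hε₂ h_inner,
    circleResidue_sub (circleIntegrable_circleResidue hε₁ hε₂ hF)
      (circleIntegrable_circleResidue hε₁ hε₂ hG), iteratedResidue, iteratedResidue]

lemma iteratedResidue_mul :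
    iteratedResidue ε₁ ε₂ (fun v₁ v₂ => g v₁ * k v₂) =
      circleResidue ε₁ g * circleResidue ε₂ k := by
  simp only [iteratedResidue, mul_comm (g _), circleResidue_const_mul]
  simp only [mul_comm (k _), circleResidue_const_mul]

end Residues

section PartitionSeries

open Finset Finset.Nat PowerSeries

variable {R : Type*} [CommRing R]

/-- The geometric series `1 / (1 - c X)`. -/
noncomputable def geomSeries (c : R) : R⟦X⟧ := mk fun n => c ^ n

/-- The generating series `1 / ((1 - x)^p (1 - y)^q (1 - x y)^r)` of vector partitions into `p`
kinds of parts `(1, 0)`, `q` kinds of parts `(0, 1)` and `r` kinds of parts `(1, 1)`, encoded as a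
power series in `x` over the power series in `y`. -/
noncomputable def vectorPartitionSeries (R : Type*) [CommRing R] (p q r : ℕ) : R⟦X⟧⟦X⟧ :=
  geomSeries 1 ^ p * C (geomSeries 1 ^ q) * geomSeries X ^ r

lemma geomSeries_mul_one_sub (c : R) : geomSeries c * (1 - C c * X) = 1 := by
  have h_rescale : rescale c (mk 1) = geomSeries c := by
    simp only [rescale_mk, Pi.one_apply, mul_one, geomSeries]
  rw [← h_rescale, ← rescale_X, ← map_one (rescale c), ← map_sub, ← map_mul,
    mk_one_mul_one_sub_eq_one]

lemma geomSeries_one_pow_eq_sub (p : ℕ) :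
    (geomSeries 1 : R⟦X⟧) ^ p = geomSeries 1 ^ (p + 1) - X * geomSeries 1 ^ (p + 1) := by
  have h := geomSeries_mul_one_sub (1 : R)
  rw [map_one, one_mul] at h
  linear_combination -geomSeries 1 ^ p * h

lemma vectorPartitionSeries_succ_succ (p q r : ℕ) :
    vectorPartitionSeries R (p + 1) q (r + 1) =
      vectorPartitionSeries R (p + 1) (q + 1) r -
        C X * vectorPartitionSeries R p (q + 1) (r + 1) := by
  have hx := geomSeries_mul_one_sub (1 : R⟦X⟧)
  have hxy := geomSeries_mul_one_sub (X : R⟦X⟧)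
  rw [map_one, one_mul] at hx
  simp only [vectorPartitionSeries, geomSeries_one_pow_eq_sub q, map_sub, map_mul]
  linear_combination geomSeries 1 ^ p * geomSeries X ^ r * C (geomSeries 1 ^ (q + 1)) *
    (geomSeries 1 * hxy - C X * geomSeries X * hx)

lemma coeff_geomSeries_pow (c : R) (p n : ℕ) :
    coeff n (geomSeries c ^ p) = (antidiagonalTuple p n).card * c ^ n := by
  have h_card : (finsuppAntidiag univ n : Finset (Fin p →₀ ℕ)).card =
      (antidiagonalTuple p n).card := by
    rw [finsuppAntidiag, card_map, card_attach, piAntidiag_univ_fin_eq_antidiagonalTuple]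
  have h_term : ∀ l ∈ (finsuppAntidiag univ n : Finset (Fin p →₀ ℕ)),
      ∏ i, coeff (l i) (geomSeries c) = c ^ n := fun l hl => by
    simp only [geomSeries, coeff_mk, prod_pow_eq_pow_sum]
    rw [← (mem_finsuppAntidiag.1 hl).1]
  rw [← Fin.prod_const, coeff_prod, sum_congr rfl h_term, sum_const, nsmul_eq_mul, h_card]

lemma coeff_vectorPartitionSeries (p q r a : ℕ) :
    coeff a (vectorPartitionSeries R p q r) =
      ∑ ik ∈ HasAntidiagonal.antidiagonal a,
        ((antidiagonalTuple p ik.1).card * (antidiagonalTuple r ik.2).card : R⟦X⟧) *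
          (X ^ ik.2 * geomSeries 1 ^ q) := by
  rw [vectorPartitionSeries, mul_right_comm, coeff_mul_C, coeff_mul, Finset.sum_mul]
  refine sum_congr rfl fun ik _ => ?_
  rw [coeff_geomSeries_pow, coeff_geomSeries_pow, one_pow]
  ring

lemma coeff_coeff_vectorPartitionSeries (p q r a b : ℕ) :
    coeff b (coeff a (vectorPartitionSeries R p q r)) =
      ∑ ik ∈ HasAntidiagonal.antidiagonal a with ik.2 ≤ b,
        ((antidiagonalTuple p ik.1 ×ˢ antidiagonalTuple q (b - ik.2) ×ˢ
          antidiagonalTuple r ik.2).card : R) := by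
  rw [coeff_vectorPartitionSeries, map_sum, sum_filter]
  refine sum_congr rfl fun ik _ => ?_
  rw [← Nat.cast_mul, ← map_natCast (C (R := R)), coeff_C_mul, coeff_X_pow_mul']
  split_ifs
  · rw [coeff_geomSeries_pow, one_pow, mul_one, card_product, card_product]
    push_cast
    ring
  · rw [mul_zero]

lemma natCard_vectorPartitions_eq_coeff (p q r a b : ℕ) :
    (Nat.card {t : (Fin p → ℕ) × (Fin q → ℕ) × (Fin r → ℕ) //
        (∑ s, t.1 s) + (∑ s, t.2.2 s) = a ∧ (∑ s, t.2.1 s) + (∑ s, t.2.2 s) = b} : R) =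
      coeff b (coeff a (vectorPartitionSeries R p q r)) := by
  rw [coeff_coeff_vectorPartitionSeries, ← Nat.cast_sum, Nat.subtype_card
    ({ik ∈ HasAntidiagonal.antidiagonal a | ik.2 ≤ b}.biUnion fun ik => antidiagonalTuple p ik.1 ×ˢ
      antidiagonalTuple q (b - ik.2) ×ˢ antidiagonalTuple r ik.2), card_biUnion]
  · rintro ⟨i, k⟩ - ⟨i', k'⟩ - h_ne
    refine disjoint_left.2 fun t ht ht' => h_ne ?_
    simp only [mem_product, mem_antidiagonalTuple] at ht ht'
    exact Prod.ext (ht.1.symm.trans ht'.1) (ht.2.2.symm.trans ht'.2.2)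
  · rintro ⟨i, j, k⟩
    simp only [mem_biUnion, mem_filter, HasAntidiagonal.mem_antidiagonal, mem_product,
      mem_antidiagonalTuple, Prod.exists]
    constructor
    · rintro ⟨m, n, ⟨h_add, h_le⟩, hi, hj, hk⟩
      lia
    · rintro ⟨ha, hb⟩
      exact ⟨_, _, ⟨ha, by lia⟩, rfl, by lia, rfl⟩

lemma coeff_X_pow_mul_coeff_vectorPartitionSeries_zero_right (p q a b s : ℕ) :
    coeff b (X ^ s * coeff a (vectorPartitionSeries R p q 0)) =
      coeff a (geomSeries 1 ^ p) * coeff b (X ^ s * geomSeries 1 ^ q) := by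
  have h_one : (geomSeries 1 : R⟦X⟧⟦X⟧) ^ p = PowerSeries.map C (geomSeries 1 ^ p) := by
    rw [map_pow]
    congr
    ext1 n
    simp only [geomSeries, coeff_map, coeff_mk, one_pow, map_one]
  rw [vectorPartitionSeries, pow_zero, mul_one, coeff_mul_C, h_one, coeff_map, mul_left_comm,
    coeff_C_mul]

lemma coeff_X_pow_mul_coeff_vectorPartitionSeries_zero_left {a b s : ℕ} (h : b < a + s)
    (q r : ℕ) : coeff b (X ^ s * coeff a (vectorPartitionSeries R 0 q r)) = 0 := by
  rw [vectorPartitionSeries, pow_zero, one_mul, coeff_C_mul, coeff_geomSeries_pow, ← mul_assoc,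
    ← mul_assoc, mul_comm _ (X ^ a), ← mul_assoc, ← mul_assoc, ← pow_add, mul_assoc,
    coeff_X_pow_mul', if_neg (by lia)]

end PartitionSeries

section Kernels

open PowerSeries

/-- The function `x^{-n} / (1 - x)^p` of `x = e^{-v}`, with a pole of order `p` at `v = 0`. -/
noncomputable def expKernel (p : ℕ) (n : ℤ) (v : ℂ) : ℂ :=
  exp (n * v) / (1 - exp (-v)) ^ p

/-- The function `x^{-m} y^{-n} / ((1 - x)^p (1 - y)^q (1 - x y)^r)` of `x = e^{-v₁}` and
`y = e^{-v₂}`; the function `f a b` is the case `m = a`, `n = b`, `p = q = r = 3`. -/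
noncomputable def vectorPartitionKernel (p q r : ℕ) (m n : ℤ) (v₁ v₂ : ℂ) : ℂ :=
  exp (m * v₁ + n * v₂) /
    ((1 - exp (-v₁)) ^ p * (1 - exp (-v₂)) ^ q * (1 - exp (-(v₁ + v₂))) ^ r)

lemma one_sub_exp_neg_ne_zero {v : ℂ} (h_ne : v ≠ 0) (h_lt : ‖v‖ < 2 * π) :
    1 - exp (-v) ≠ 0 := by
  intro h_exp
  obtain ⟨n, hn⟩ := exp_eq_one_iff.1 (sub_eq_zero.1 h_exp).symm
  have h_norm : ‖v‖ = |(n : ℝ)| * (2 * π) := by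
    rw [← norm_neg, hn]
    simp [abs_of_pos Real.pi_pos]
  have hn0 : n ≠ 0 := by
    rintro rfl
    simp [h_ne] at h_norm
  have h_one_le : (1 : ℝ) ≤ |(n : ℝ)| := by exact_mod_cast Int.one_le_abs hn0
  nlinarith [Real.pi_pos]

lemma one_sub_exp_neg_ne_zero_of_mem_sphere {r : ℝ} (hr : 0 < r) (h_lt : r < 2 * π) {v : ℂ}
    (hv : v ∈ sphere 0 r) : 1 - exp (-v) ≠ 0 :=
  one_sub_exp_neg_ne_zero (ne_zero_of_mem_sphere hr.ne' ⟨v, hv⟩)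
    (by rwa [mem_sphere_zero_iff_norm.1 hv])

section OneVariable

variable {r : ℝ} (hr : 0 < r) (h_lt : r < 2 * π)
include hr h_lt

lemma circleIntegrable_expKernel (p : ℕ) (n : ℤ) : CircleIntegrable (expKernel p n) 0 r := by
  refine ContinuousOn.circleIntegrable hr.le (ContinuousOn.div (by fun_prop) (by fun_prop) ?_)
  exact fun v hv => pow_ne_zero p (one_sub_exp_neg_ne_zero_of_mem_sphere hr h_lt hv)

lemma circleResidue_expKernel_one_zero : circleResidue r (expKernel 1 0) = 1 := by
  have h_deriv : deriv (fun v : ℂ => 1 - exp (-v)) 0 = 1 := by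
    simpa using ((hasDerivAt_neg (0 : ℂ)).cexp.const_sub 1).deriv
  have h_inv := circleResidue_inv_of_simple_zero (g := fun v => 1 - exp (-v)) hr
    (by fun_prop) (by simp) (by simp [h_deriv, -deriv_const_sub']) fun v hv h_ne =>
      one_sub_exp_neg_ne_zero h_ne ((mem_closedBall_zero_iff.1 hv).trans_lt h_lt)
  rw [h_deriv, inv_one] at h_inv
  rw [← h_inv]
  congr
  ext v
  rw [expKernel, Int.cast_zero, zero_mul, exp_zero, pow_one, one_div]

lemma circleResidue_expKernel_add_two_neg_add_one (p : ℕ) :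
    circleResidue r (expKernel (p + 2) (-(p + 1 : ℕ))) = 0 := by
  refine circleResidue_eq_zero_of_hasDerivAt
    (k := fun v => -((p + 1 : ℕ) : ℂ)⁻¹ * ((exp v - 1) ^ (p + 1))⁻¹) hr.le fun v hv => ?_
  have h_exp : exp v ≠ 0 := exp_ne_zero v
  have h_ne : exp v - 1 ≠ 0 := by
    have h := mul_ne_zero h_exp (one_sub_exp_neg_ne_zero_of_mem_sphere hr h_lt hv)
    rwa [mul_sub, ← exp_add, add_neg_cancel, exp_zero, mul_one] at h
  have h_kernel : expKernel (p + 2) (-(p + 1 : ℕ)) v = exp v / (exp v - 1) ^ (p + 2) := by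
    have h_sub : 1 - exp (-v) = (exp v - 1) / exp v := by
      rw [exp_neg, sub_div, div_self h_exp, one_div]
    rw [expKernel, h_sub, Int.cast_neg, Int.cast_natCast, neg_mul, exp_neg, exp_nat_mul, div_pow]
    field_simp
    ring
  refine (((((hasDerivAt_exp v).sub_const 1).fun_pow (p + 1)).fun_inv
    (pow_ne_zero _ h_ne)).const_mul _).congr_deriv ?_
  have hp : ((p + 1 : ℕ) : ℂ) ≠ 0 := Nat.cast_ne_zero.2 p.succ_ne_zero
  rw [h_kernel, add_tsub_cancel_right]
  field_simp
  ring

lemma circleResidue_expKernel_sub_one (p : ℕ) (n : ℤ) :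
    circleResidue r (expKernel (p + 1) (n - 1)) =
      circleResidue r (expKernel (p + 1) n) - circleResidue r (expKernel p n) := by
  rw [← circleResidue_sub (circleIntegrable_expKernel hr h_lt _ _)
    (circleIntegrable_expKernel hr h_lt _ _)]
  refine circleResidue_congr hr.le fun v hv => ?_
  have h_ne := one_sub_exp_neg_ne_zero_of_mem_sphere hr h_lt hv
  simp only [expKernel]
  rw [Int.cast_sub, Int.cast_one, sub_mul, one_mul, sub_eq_add_neg, exp_add]
  field_simp
  ring

omit h_lt in
lemma circleResidue_expKernel_zero (n : ℤ) : circleResidue r (expKernel 0 n) = 0 := by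
  have h_kernel : expKernel 0 n = fun v => exp (n * v) := by
    ext v
    rw [expKernel, pow_zero, div_one]
  rw [h_kernel]
  exact circleResidue_eq_zero_of_differentiableOn hr.le (by fun_prop)

lemma circleResidue_expKernel {n p s : ℕ} (h : s < n + p) :
    circleResidue r (expKernel p (n - s)) = coeff n (X ^ s * geomSeries (1 : ℂ) ^ p) := by
  induction p generalizing s with
  | zero =>
    rw [circleResidue_expKernel_zero hr, pow_zero, mul_one, coeff_X_pow, if_neg (by lia)]
  | succ p ih =>
    -- The recurrence in `p` reduces every `s` to `s = n + p`, where the integrand is a derivative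
    -- unless it has a simple pole.
    obtain ⟨d, hd⟩ : ∃ d, n + p = s + d := ⟨n + p - s, by lia⟩
    clear h
    induction d generalizing s with
    | zero =>
      obtain rfl : s = n + p := by lia
      rw [coeff_X_pow_mul']
      rcases p with _ | p
      · simpa [geomSeries, ← coeff_zero_eq_constantCoeff_apply] using
          circleResidue_expKernel_one_zero hr h_lt
      · rw [if_neg (by lia), ← circleResidue_expKernel_add_two_neg_add_one hr h_lt p]
        congr 2
        push_cast
        ring
    | succ d ihd =>
      have h_step := circleResidue_expKernel_sub_one hr h_lt p (n - s)
      have h_next := ihd (s := s + 1) (by lia)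
      rw [Nat.cast_succ, ← sub_sub, h_step, ih (by lia), pow_succ, mul_assoc] at h_next
      rw [geomSeries_one_pow_eq_sub p, mul_sub, map_sub] at h_next
      linear_combination h_next

end OneVariable

section TwoVariables

variable {ε₁ ε₂ : ℝ} (h₁ : 0 < ε₁) (h₁₂ : ε₁ < ε₂) (h₂ : ε₁ + ε₂ < 2 * π)
include h₁ h₁₂ h₂

omit h₁ in
lemma one_sub_exp_neg_add_ne_zero {v₁ v₂ : ℂ} (hv₁ : v₁ ∈ closedBall 0 ε₁)
    (hv₂ : v₂ ∈ sphere 0 ε₂) : 1 - exp (-(v₁ + v₂)) ≠ 0 := by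
  rw [mem_closedBall_zero_iff] at hv₁
  rw [mem_sphere_zero_iff_norm] at hv₂
  refine one_sub_exp_neg_ne_zero (fun h_zero => ?_) (by linarith [norm_add_le v₁ v₂])
  rw [eq_neg_of_add_eq_zero_left h_zero, norm_neg] at hv₁
  linarith

lemma continuousOn_vectorPartitionKernel (p q r : ℕ) (m n : ℤ) :
    ContinuousOn (uncurry (vectorPartitionKernel p q r m n)) (sphere 0 ε₁ ×ˢ sphere 0 ε₂) := by
  refine ContinuousOn.div (by fun_prop) (by fun_prop) fun v hv => ?_
  exact mul_ne_zero (mul_ne_zero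
    (pow_ne_zero p (one_sub_exp_neg_ne_zero_of_mem_sphere h₁ (by linarith) hv.1))
    (pow_ne_zero q (one_sub_exp_neg_ne_zero_of_mem_sphere (by linarith) (by linarith) hv.2)))
    (pow_ne_zero r
      (one_sub_exp_neg_add_ne_zero h₁₂ h₂ (sphere_subset_closedBall hv.1) hv.2))

lemma iteratedResidue_vectorPartitionKernel_succ_succ (p q r : ℕ) (m n : ℤ) :
    iteratedResidue ε₁ ε₂ (vectorPartitionKernel (p + 1) q (r + 1) m n) =
      iteratedResidue ε₁ ε₂ (vectorPartitionKernel (p + 1) (q + 1) r m n) -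
        iteratedResidue ε₁ ε₂ (vectorPartitionKernel p (q + 1) (r + 1) m (n - 1)) := by
  have hε₂ : 0 < ε₂ := h₁.trans h₁₂
  rw [← iteratedResidue_sub h₁.le hε₂.le
    (continuousOn_vectorPartitionKernel h₁ h₁₂ h₂ _ _ _ _ _)
    (continuousOn_vectorPartitionKernel h₁ h₁₂ h₂ _ _ _ _ _)]
  refine iteratedResidue_congr h₁.le hε₂.le fun v₁ hv₁ v₂ hv₂ => ?_
  have hx := one_sub_exp_neg_ne_zero_of_mem_sphere h₁ (by linarith) hv₁
  have hy := one_sub_exp_neg_ne_zero_of_mem_sphere hε₂ (by linarith) hv₂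
  have hxy := one_sub_exp_neg_add_ne_zero h₁₂ h₂ (sphere_subset_closedBall hv₁) hv₂
  have h_exp : exp (m * v₁ + ((n - 1 : ℤ) : ℂ) * v₂) = exp (m * v₁ + n * v₂) * exp (-v₂) := by
    rw [← exp_add]
    push_cast
    ring_nf
  have h_add : exp (-(v₁ + v₂)) = exp (-v₁) * exp (-v₂) := by rw [neg_add, exp_add]
  rw [h_add] at hxy
  rw [vectorPartitionKernel, vectorPartitionKernel, vectorPartitionKernel, h_exp, h_add]
  field_simp
  ring

lemma iteratedResidue_vectorPartitionKernel_zero_left (q r : ℕ) (m n : ℤ) :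
    iteratedResidue ε₁ ε₂ (vectorPartitionKernel 0 q r m n) = 0 := by
  have hε₂ : 0 < ε₂ := h₁.trans h₁₂
  have h_inner : Set.EqOn
      (fun v₂ => circleResidue ε₁ fun v₁ => vectorPartitionKernel 0 q r m n v₁ v₂)
      (fun _ => 0) (sphere 0 ε₂) := fun v₂ hv₂ => by
    refine circleResidue_eq_zero_of_differentiableOn h₁.le
      (DifferentiableOn.div (by fun_prop) (by fun_prop) fun v₁ hv₁ => ?_)
    rw [pow_zero, one_mul]
    exact mul_ne_zero
      (pow_ne_zero q (one_sub_exp_neg_ne_zero_of_mem_sphere hε₂ (by linarith) hv₂))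
      (pow_ne_zero r (one_sub_exp_neg_add_ne_zero h₁₂ h₂ hv₁ hv₂))
  rw [iteratedResidue, circleResidue_congr hε₂.le h_inner]
  exact circleResidue_eq_zero_of_differentiableOn hε₂.le (differentiableOn_const 0)

omit h₁ h₁₂ h₂ in
lemma iteratedResidue_vectorPartitionKernel_zero_right (p q : ℕ) (m n : ℤ) :
    iteratedResidue ε₁ ε₂ (vectorPartitionKernel p q 0 m n) =
      circleResidue ε₁ (expKernel p m) * circleResidue ε₂ (expKernel q n) := by
  rw [← iteratedResidue_mul]
  congr
  ext v₁ v₂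
  rw [vectorPartitionKernel, expKernel, expKernel, pow_zero, mul_one, exp_add, mul_div_mul_comm]

theorem iteratedResidue_vectorPartitionKernel {p q r a b s : ℕ} (hp : b < a + p + s)
    (hq : s < b + q) :
    iteratedResidue ε₁ ε₂ (vectorPartitionKernel p q r a (b - s)) =
      coeff b (X ^ s * coeff a (vectorPartitionSeries ℂ p q r)) := by
  induction p generalizing q r s with
  | zero =>
    rw [iteratedResidue_vectorPartitionKernel_zero_left h₁ h₁₂ h₂,
      coeff_X_pow_mul_coeff_vectorPartitionSeries_zero_left (by lia)]
  | succ p ihp =>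
    induction r generalizing q with
    | zero =>
      have h_left := circleResidue_expKernel h₁ (by linarith) (show 0 < a + (p + 1) by lia)
      have h_right := circleResidue_expKernel (h₁.trans h₁₂) (by linarith) hq
      rw [Nat.cast_zero, sub_zero, pow_zero, one_mul] at h_left
      rw [iteratedResidue_vectorPartitionKernel_zero_right, h_left, h_right,
        coeff_X_pow_mul_coeff_vectorPartitionSeries_zero_right]
    | succ r ihr =>
      have h_shift := ihp (q := q + 1) (r := r + 1) (s := s + 1) (by lia) (by lia)
      rw [Nat.cast_succ, ← sub_sub] at h_shift
      rw [iteratedResidue_vectorPartitionKernel_succ_succ h₁ h₁₂ h₂, ihr (by lia), h_shift,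
        vectorPartitionSeries_succ_succ, map_sub, coeff_C_mul, mul_sub, map_sub, ← mul_assoc,
        pow_succ]

end TwoVariables

end Kernels

theorem iterated_residue_eq_partition_count_general {p q r a b : ℕ} (hp : b < a + p)
    (hq : 0 < b + q) {ε₁ ε₂ : ℝ} (h₁ : 0 < ε₁) (h₁₂ : ε₁ < ε₂) (h₂ : ε₁ + ε₂ < 2 * π) :
    iteratedResidue ε₁ ε₂ (vectorPartitionKernel p q r a b) =
      (Nat.card {t : (Fin p → ℕ) × (Fin q → ℕ) × (Fin r → ℕ) //
        (∑ s, t.1 s) + (∑ s, t.2.2 s) = a ∧ (∑ s, t.2.1 s) + (∑ s, t.2.2 s) = b} : ℂ) := by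
  have h := iteratedResidue_vectorPartitionKernel h₁ h₁₂ h₂ (r := r) (s := 0) hp hq
  rwa [Nat.cast_zero, sub_zero, pow_zero, one_mul, ← natCard_vectorPartitions_eq_coeff] at h

lemma f_eq_vectorPartitionKernel (a b : ℕ) : f a b = vectorPartitionKernel 3 3 3 a b := by
  ext v₁ v₂
  rw [f, vectorPartitionKernel, Int.cast_natCast, Int.cast_natCast]

/-- The iterated residue `res_{v₂=0} res_{v₁=0} f`, computed as iterated circle
integrals with radii `0 < ε₁ < ε₂ < π` (the inner residue in `v₁` is taken with
`v₂` a fixed nonzero parameter on the circle `|v₂| = ε₂`), equals the number of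
9-tuples of nonnegative integers `(i,j,k)` with `∑ i + ∑ k = a`, `∑ j + ∑ k = b`. -/
theorem iterated_residue_eq_partition_count (a b : ℕ) (hab : b ≤ a)
    (ε₁ ε₂ : ℝ) (h₁ : 0 < ε₁) (h₁₂ : ε₁ < ε₂) (h₂ : ε₂ < Real.pi) :
    (1 / (2 * Real.pi * Complex.I)) *
        (∮ v₂ in C(0, ε₂), (1 / (2 * Real.pi * Complex.I)) *
          ∮ v₁ in C(0, ε₁), f a b v₁ v₂) =
      (Nat.card {t : (Fin 3 → ℕ) × (Fin 3 → ℕ) × (Fin 3 → ℕ) //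
        (∑ s, t.1 s) + (∑ s, t.2.2 s) = a ∧ (∑ s, t.2.1 s) + (∑ s, t.2.2 s) = b} : ℂ) := by
  rw [f_eq_vectorPartitionKernel]
  exact iterated_residue_eq_partition_count_general (by lia) (by lia) h₁ h₁₂ (by linarith)
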